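/- Let H = Σ_{k=1}^d h_k P_k, where P_1,…,P_d are pairwise orthogonal self-adjoint projections on a complex Hilbert space ℋ with P_1 + ⋯ + P_d = I, and h_1 < ⋯ < h_d are real numbers with h_{k+1} − h_k ≥ η > 0 for all k. Let B be a bounded operator on ℋ. Then the operator X = i Σ_{k≠ℓ} (h_k − h_ℓ)^{−1} P_k B P_ℓ is the unique bounded operator satisfying both (i) i(XH − HX) = B − Σ_{k=1}^d P_k B P_k and (ii) Σ_{k=1}^d P_k X P_k = 0 (homological equation). Moreover ‖X‖ ≤ (π/(√3 η)) ‖B‖, and if B is self-adjoint then X is self-adjoint. -/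

import Mathlib

open scoped BigOperators

/-!
Relative to the block decomposition `B = ∑ P_k B P_l`, each map in the problem is a Schur multiplier
`S_m : B ↦ ∑ m_{kl} P_k B P_l`, and `S_m S_n = S_{mn}` with pointwise products. The commutator
`Y ↦ i[Y, H]` has symbol `i(h_l - h_k)`, the pinching `Y ↦ ∑ P_k Y P_k` has symbol `δ_{kl}`, and
`X = S_w B` with `w_{kl} = i(h_k - h_l)⁻¹`. Thus `w` inverts the commutator off the diagonal and
vanishes on it, which gives existence and uniqueness.

For the norm, Pythagoras applied to the ranges of the `P_k` and then to `∑ m_{kl} P_l v` gives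
`‖S_m‖² ≤ max_l ∑_k |m_{kl}|²`. The gap condition yields `|h_k - h_l| ≥ η |k - l|`, so for `w` these
column sums are at most `η⁻² ∑_{n ≠ 0} n⁻² = π² / (3 η²)`.
-/

section Symbols

variable {ι R A : Type*} [Fintype ι]

/-- The Schur multiplier with symbol `m`, relative to the block decomposition of a ring given by a
family `e` (in practice, complete orthogonal idempotents): it multiplies the `(k, l)` block
`e k * b * e l` of `b` by `m k l`. -/
def blockSchur [CommSemiring R] [Semiring A] [Algebra R A] (e : ι → A) (m : ι → ι → R)
    (b : A) : A :=
  ∑ k, ∑ l, m k l • (e k * b * e l)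

/-- The pinching of `b` by the family `e`, which keeps only the diagonal blocks of `b`. -/
def pinching [Semiring A] (e : ι → A) (b : A) : A :=
  ∑ k, e k * b * e k

section Semiring

variable [CommSemiring R] [Semiring A] [Algebra R A] {e : ι → A}

lemma blockSchur_zero (b : A) : blockSchur e (0 : ι → ι → R) b = 0 := by
  simp [blockSchur]

lemma blockSchur_one (he : ∑ k, e k = 1) (b : A) : blockSchur e (1 : ι → ι → R) b = b := by
  simp [blockSchur, ← Finset.mul_sum, ← Finset.sum_mul, he]

lemma blockSchur_add (m n : ι → ι → R) (b : A) :
    blockSchur e (m + n) b = blockSchur e m b + blockSchur e n b := by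
  simp [blockSchur, add_smul, Finset.sum_add_distrib]

lemma blockSchur_smul (c : R) (m : ι → ι → R) (b : A) :
    blockSchur e (c • m) b = c • blockSchur e m b := by
  simp [blockSchur, mul_smul, Finset.smul_sum]

lemma pinching_eq_blockSchur [DecidableEq ι] (b : A) :
    pinching e b = blockSchur e (fun k l ↦ if k = l then (1 : R) else 0) b := by
  simp [pinching, blockSchur]

lemma mul_blockSchur_mul (he : OrthogonalIdempotents e) (m : ι → ι → R) (b : A) (i j : ι) :
    e i * blockSchur e m b * e j = m i j • (e i * b * e j) := by
  classical
  have block_mul (k l : ι) :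
      e i * (e k * b * e l) * e j = if i = k then if l = j then e i * b * e j else 0 else 0 := by
    calc e i * (e k * b * e l) * e j = (e i * e k) * b * (e l * e j) := by simp only [mul_assoc]
      _ = _ := by rw [he.mul_eq, he.mul_eq]; split_ifs <;> simp_all
  simp [blockSchur, Finset.mul_sum, Finset.sum_mul, block_mul]

lemma blockSchur_blockSchur (he : OrthogonalIdempotents e) (m n : ι → ι → R) (b : A) :
    blockSchur e m (blockSchur e n b) = blockSchur e (m * n) b := by
  simp only [blockSchur.eq_def e m, mul_blockSchur_mul he, smul_smul]
  rfl

lemma mul_sum_smul_eq_blockSchur (he : ∑ k, e k = 1) (h : ι → R) (b : A) :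
    b * ∑ l, h l • e l = blockSchur e (fun _ l ↦ h l) b := by
  simp only [blockSchur, ← mul_smul_comm, ← Finset.mul_sum, ← Finset.sum_mul, he, one_mul]

lemma sum_smul_mul_eq_blockSchur (he : ∑ k, e k = 1) (h : ι → R) (b : A) :
    (∑ k, h k • e k) * b = blockSchur e (fun k _ ↦ h k) b := by
  simp only [blockSchur, ← smul_mul_assoc, ← Finset.mul_sum, ← Finset.sum_mul, he, mul_one]

lemma star_blockSchur [StarRing R] [StarRing A] [StarModule R A] (he : ∀ k, IsSelfAdjoint (e k))
    (m : ι → ι → R) (b : A) :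
    star (blockSchur e m b) = blockSchur e (fun k l ↦ star (m l k)) (star b) := by
  simp only [blockSchur, star_sum, star_smul, star_mul, (he _).star_eq, mul_assoc]
  exact Finset.sum_comm

end Semiring

section Ring

variable [CommRing R] [Ring A] [Algebra R A] {e : ι → A}

lemma blockSchur_sub (m n : ι → ι → R) (b : A) :
    blockSchur e (m - n) b = blockSchur e m b - blockSchur e n b := by
  simp [blockSchur, sub_smul, Finset.sum_sub_distrib]

lemma commutator_eq_blockSchur (he : ∑ k, e k = 1) (h : ι → R) (y : A) :
    y * (∑ k, h k • e k) - (∑ k, h k • e k) * y = blockSchur e (fun k l ↦ h l - h k) y := by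
  rw [mul_sum_smul_eq_blockSchur he, sum_smul_mul_eq_blockSchur he, ← blockSchur_sub]
  rfl

theorem blockSchur_eq_sub_pinching_iff (he : CompleteOrthogonalIdempotents e) {m w : ι → ι → R}
    (hw : ∀ k, w k k = 0) (hmw : ∀ k l, k ≠ l → m k l * w k l = 1) (b y : A) :
    (blockSchur e m y = b - pinching e b ∧ pinching e y = 0) ↔ y = blockSchur e w b := by
  classical
  have he' := he.toOrthogonalIdempotents
  let diag : ι → ι → R := fun k l ↦ if k = l then 1 else 0
  have hmul : m * w = 1 - diag := by
    ext k l
    by_cases hkl : k = l <;> simp_all [diag]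
  have hdiag : diag * w = 0 := by
    ext k l
    by_cases hkl : k = l <;> simp_all [diag]
  have pinching_eq (a : A) : pinching e a = blockSchur e diag a := pinching_eq_blockSchur a
  have sub_pinching_eq : b - pinching e b = blockSchur e (1 - diag) b := by
    rw [blockSchur_sub, blockSchur_one he.complete, pinching_eq]
  constructor
  · rintro ⟨hcomm, hpinch⟩
    calc y = blockSchur e (w * m + diag) y := by
          rw [mul_comm, hmul, sub_add_cancel, blockSchur_one he.complete]
      _ = blockSchur e w (blockSchur e (1 - diag) b) := by
          rw [blockSchur_add, ← blockSchur_blockSchur he', hcomm, ← pinching_eq, hpinch, add_zero,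
            sub_pinching_eq]
      _ = blockSchur e w b := by
          rw [blockSchur_blockSchur he', mul_sub, mul_one, mul_comm, hdiag, sub_zero]
  · rintro rfl
    constructor
    · rw [blockSchur_blockSchur he', hmul, sub_pinching_eq]
    · rw [pinching_eq, blockSchur_blockSchur he', hdiag, blockSchur_zero]

end Ring

end Symbols

section Norm

variable {𝕜 E ι : Type*} [RCLike 𝕜] [NormedAddCommGroup E] [InnerProductSpace 𝕜 E] [Fintype ι]
  {P : ι → E →L[𝕜] E}

lemma blockSchur_apply (m : ι → ι → 𝕜) (B : E →L[𝕜] E) (v : E) :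
    blockSchur P m B v = ∑ k, P k (B (∑ l, m k l • P l v)) := by
  simp [blockSchur, sum_apply]

variable [CompleteSpace E]

lemma norm_sq_sum_apply (hsa : ∀ k, IsSelfAdjoint (P k)) (hP : Pairwise (P · * P · = 0))
    (v : ι → E) : ‖∑ k, P k (v k)‖ ^ 2 = ∑ k, ‖P k (v k)‖ ^ 2 := by
  have inner_eq_zero (k l : ι) (hkl : k ≠ l) : inner 𝕜 (P k (v k)) (P l (v l)) = 0 := by
    have hPP : P k (P l (v l)) = 0 := by
      rw [← mul_apply_eq_comp, hP hkl, zero_apply]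
    exact ((hsa k).isSymmetric _ _).trans (by simp [hPP])
  have inner_sum_self (k : ι) :
      inner 𝕜 (P k (v k)) (∑ l, P l (v l)) = inner 𝕜 (P k (v k)) (P k (v k)) := by
    rw [inner_sum]
    exact Fintype.sum_eq_single k fun l hl ↦ inner_eq_zero k l hl.symm
  simp only [norm_sq_eq_re_inner (𝕜 := 𝕜), sum_inner, inner_sum_self, map_sum]

lemma norm_sq_sum_smul_apply (hsa : ∀ k, IsSelfAdjoint (P k)) (hP : Pairwise (P · * P · = 0))
    (c : ι → 𝕜) (v : E) : ‖∑ k, c k • P k v‖ ^ 2 = ∑ k, ‖c k‖ ^ 2 * ‖P k v‖ ^ 2 := by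
  simpa only [map_smul, norm_smul, mul_pow] using norm_sq_sum_apply hsa hP fun k ↦ c k • v

lemma sum_norm_sq_apply (hsa : ∀ k, IsSelfAdjoint (P k)) (hP : CompleteOrthogonalIdempotents P)
    (v : E) : ∑ k, ‖P k v‖ ^ 2 = ‖v‖ ^ 2 := by
  rw [← norm_sq_sum_apply hsa hP.ortho, ← sum_apply, hP.complete, one_apply_eq_self]

theorem norm_blockSchur_le (hsa : ∀ k, IsSelfAdjoint (P k)) (hP : CompleteOrthogonalIdempotents P)
    {m : ι → ι → 𝕜} {C : ℝ} (hC : 0 ≤ C) (hm : ∀ l, ∑ k, ‖m k l‖ ^ 2 ≤ C ^ 2) (B : E →L[𝕜] E) :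
    ‖blockSchur P m B‖ ≤ C * ‖B‖ := by
  refine ContinuousLinearMap.opNorm_le_bound _ (by positivity) fun v ↦ ?_
  have norm_apply_le (k : ι) (u : E) : ‖P k (B u)‖ ≤ ‖B‖ * ‖u‖ :=
    calc ‖P k (B u)‖ ≤ 1 * ‖B u‖ :=
          (P k).le_of_opNorm_le (IsStarProjection.norm_le _ ⟨hP.idem k, hsa k⟩) _
      _ ≤ ‖B‖ * ‖u‖ := by rw [one_mul]; exact B.le_opNorm u
  refine le_of_sq_le_sq ?_ (by positivity)
  calc ‖blockSchur P m B v‖ ^ 2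
      = ∑ k, ‖P k (B (∑ l, m k l • P l v))‖ ^ 2 := by
        rw [blockSchur_apply, norm_sq_sum_apply hsa hP.ortho]
    _ ≤ ∑ k, (‖B‖ * ‖∑ l, m k l • P l v‖) ^ 2 := by
        gcongr with k
        exact norm_apply_le k _
    _ = ‖B‖ ^ 2 * ∑ l, (∑ k, ‖m k l‖ ^ 2) * ‖P l v‖ ^ 2 := by
        simp only [mul_pow, norm_sq_sum_smul_apply hsa hP.ortho, ← Finset.mul_sum, Finset.sum_mul]
        rw [Finset.sum_comm]
    _ ≤ ‖B‖ ^ 2 * ∑ l, C ^ 2 * ‖P l v‖ ^ 2 := by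
        gcongr with l
        exact hm l
    _ = (C * ‖B‖ * ‖v‖) ^ 2 := by
        rw [← Finset.mul_sum, sum_norm_sq_apply hsa hP]
        ring

end Norm

section Gaps

lemma hasSum_int_one_div_sq : HasSum (fun n : ℤ ↦ 1 / (n : ℝ) ^ 2) (Real.pi ^ 2 / 3) := by
  have hpos : HasSum (fun n : ℕ ↦ 1 / ((n : ℤ) : ℝ) ^ 2) (Real.pi ^ 2 / 6) := by
    simpa only [Int.cast_natCast] using hasSum_zeta_two
  have hneg : HasSum (fun n : ℕ ↦ 1 / ((-n : ℤ) : ℝ) ^ 2) (Real.pi ^ 2 / 6) := by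
    simpa only [Int.cast_neg, neg_sq] using hpos
  have hvalue : Real.pi ^ 2 / 3 = Real.pi ^ 2 / 6 + Real.pi ^ 2 / 6 - 1 / ((0 : ℤ) : ℝ) ^ 2 := by
    rw [Int.cast_zero]
    ring
  rw [hvalue]
  exact hpos.of_nat_of_neg hneg

lemma sum_inv_sub_sq_le {ι : Type*} [Fintype ι] {h : ι → ℝ} {n : ι → ℤ} {η : ℝ}
    (hn : Function.Injective n) (hη : 0 < η)
    (hsep : ∀ k l, η * |(n k - n l : ℝ)| ≤ |h k - h l|) (l : ι) :
    ∑ k, ((h k - h l)⁻¹) ^ 2 ≤ (Real.pi / (√3 * η)) ^ 2 := by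
  have term_le (k : ι) : ((h k - h l)⁻¹) ^ 2 ≤ (η⁻¹) ^ 2 * (1 / ((n k - n l : ℤ) : ℝ) ^ 2) := by
    rcases eq_or_ne k l with rfl | hkl
    · simp
    have hnkl : 0 < |(n k - n l : ℝ)| := by
      simpa [sub_eq_zero] using hn.ne hkl
    calc ((h k - h l)⁻¹) ^ 2 = (|h k - h l|⁻¹) ^ 2 := by rw [← abs_inv, sq_abs]
      _ ≤ ((η * |(n k - n l : ℝ)|)⁻¹) ^ 2 := by
          gcongr
          exact hsep k l
      _ = _ := by rw [mul_inv, mul_pow, inv_pow |(_ : ℝ)|, sq_abs, one_div, Int.cast_sub]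
  have hinj : Function.Injective fun k ↦ n k - n l := fun _ _ hk ↦ hn (sub_left_injective hk)
  calc ∑ k, ((h k - h l)⁻¹) ^ 2
      ≤ (η⁻¹) ^ 2 * ∑ k, 1 / ((n k - n l : ℤ) : ℝ) ^ 2 := by
        rw [Finset.mul_sum]
        exact Finset.sum_le_sum fun k _ ↦ term_le k
    _ ≤ (η⁻¹) ^ 2 * (Real.pi ^ 2 / 3) := by
        gcongr
        rw [← Finset.sum_image (f := fun z : ℤ ↦ 1 / (z : ℝ) ^ 2) hinj.injOn]
        exact sum_le_hasSum _ (fun _ _ ↦ by positivity) hasSum_int_one_div_sq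
    _ = (Real.pi / (√3 * η)) ^ 2 := by
        rw [div_pow, mul_pow, Real.sq_sqrt (by norm_num)]
        field_simp

variable {d : ℕ} {h : Fin d → ℝ} {η : ℝ}

lemma monotone_sub_mul_of_gap
    (hgap : ∀ k : Fin d, ∀ hk : (k : ℕ) + 1 < d, η ≤ h ⟨(k : ℕ) + 1, hk⟩ - h k) :
    Monotone fun k : Fin d ↦ h k - η * k := by
  cases d with
  | zero => exact Subsingleton.monotone _
  | succ d =>
    refine Fin.monotone_iff_le_succ.2 fun k ↦ ?_
    have hk : η ≤ h k.succ - h k.castSucc := hgap k.castSucc (by simp)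
    simp only [Fin.val_castSucc, Fin.val_succ]
    push_cast
    linarith

lemma mul_abs_sub_le_abs_sub_of_gap
    (hgap : ∀ k : Fin d, ∀ hk : (k : ℕ) + 1 < d, η ≤ h ⟨(k : ℕ) + 1, hk⟩ - h k) (k l : Fin d) :
    η * |((k : ℕ) - (l : ℕ) : ℝ)| ≤ |h k - h l| := by
  wlog hlk : l ≤ k generalizing k l
  · simpa only [abs_sub_comm] using this l k (le_of_not_ge hlk)
  have hmono := monotone_sub_mul_of_gap hgap hlk
  have hlk' : ((l : ℕ) : ℝ) ≤ (k : ℕ) := by exact_mod_cast hlk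
  rw [abs_of_nonneg (sub_nonneg.2 hlk')]
  refine le_trans ?_ (le_abs_self _)
  linarith

lemma strictMono_of_gap (hη : 0 < η)
    (hgap : ∀ k : Fin d, ∀ hk : (k : ℕ) + 1 < d, η ≤ h ⟨(k : ℕ) + 1, hk⟩ - h k) :
    StrictMono h := by
  intro k l hkl
  have hmono := monotone_sub_mul_of_gap hgap hkl.le
  have hmul : η * (k : ℕ) < η * (l : ℕ) := by gcongr; exact hkl
  linarith

lemma sum_inv_sub_sq_le_of_gap (hη : 0 < η)
    (hgap : ∀ k : Fin d, ∀ hk : (k : ℕ) + 1 < d, η ≤ h ⟨(k : ℕ) + 1, hk⟩ - h k) (l : Fin d) :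
    ∑ k, ((h k - h l)⁻¹) ^ 2 ≤ (Real.pi / (√3 * η)) ^ 2 :=
  sum_inv_sub_sq_le (n := fun k : Fin d ↦ ((k : ℕ) : ℤ))
    (Nat.cast_injective.comp Fin.val_injective) hη
    (by simpa only [Int.cast_natCast] using mul_abs_sub_le_abs_sub_of_gap hgap) l

end Gaps

section HomologicalEquation

variable {ι : Type*} {h : ι → ℝ}

/-- The symbol of the Schur multiplier solving the homological equation for a Hamiltonian with
eigenvalues `h`. Its diagonal vanishes because `0⁻¹ = 0`. -/
noncomputable def homologicalSymbol (h : ι → ℝ) (k l : ι) : ℂ :=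
  Complex.I * ((h k : ℂ) - h l)⁻¹

lemma homologicalSymbol_self (k : ι) : homologicalSymbol h k k = 0 := by
  simp [homologicalSymbol]

lemma star_homologicalSymbol_swap (k l : ι) :
    star (homologicalSymbol h l k) = homologicalSymbol h k l := by
  rw [homologicalSymbol, homologicalSymbol, ← neg_sub (h l : ℂ), inv_neg]
  simp

lemma norm_homologicalSymbol_sq (k l : ι) :
    ‖homologicalSymbol h k l‖ ^ 2 = ((h k - h l)⁻¹) ^ 2 := by
  rw [homologicalSymbol, norm_mul, Complex.norm_I, one_mul, ← Complex.ofReal_sub,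
    ← Complex.ofReal_inv, Complex.norm_real, Real.norm_eq_abs, sq_abs]

lemma commutatorSymbol_mul_homologicalSymbol (hinj : Function.Injective h) {k l : ι} (hkl : k ≠ l) :
    Complex.I * ((h l : ℂ) - h k) * homologicalSymbol h k l = 1 := by
  have hne : (h k : ℂ) - h l ≠ 0 := sub_ne_zero.2 (by exact_mod_cast hinj.ne hkl)
  rw [homologicalSymbol]
  field_simp
  rw [Complex.I_sq]
  ring

lemma smul_sum_eq_blockSchur_homologicalSymbol {A : Type*} [Semiring A] [Algebra ℂ A] [Fintype ι]
    [DecidableEq ι] (h : ι → ℝ) (e : ι → A) (b : A) :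
    (Complex.I • ∑ k, ∑ l, if k = l then 0 else ((h k : ℂ) - h l)⁻¹ • (e k * b * e l)) =
      blockSchur e (homologicalSymbol h) b := by
  simp only [blockSchur, homologicalSymbol, mul_smul, ← Finset.smul_sum]
  refine congrArg _ (Finset.sum_congr rfl fun k _ ↦ Finset.sum_congr rfl fun l _ ↦ ?_)
  split_ifs with hkl <;> simp [hkl]

theorem homologicalEquation_iff {A : Type*} [Ring A] [Algebra ℂ A] [Fintype ι] {e : ι → A}
    (he : CompleteOrthogonalIdempotents e) (hinj : Function.Injective h) (b y : A) :
    (Complex.I • (y * (∑ k, (h k : ℂ) • e k) - (∑ k, (h k : ℂ) • e k) * y) = b - pinching e b ∧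
      pinching e y = 0) ↔ y = blockSchur e (homologicalSymbol h) b := by
  rw [commutator_eq_blockSchur he.complete, ← blockSchur_smul]
  exact blockSchur_eq_sub_pinching_iff he homologicalSymbol_self
    (fun _ _ ↦ commutatorSymbol_mul_homologicalSymbol hinj) b y

lemma isSelfAdjoint_blockSchur_homologicalSymbol {A : Type*} [Semiring A] [StarRing A]
    [Algebra ℂ A] [StarModule ℂ A] [Fintype ι] {e : ι → A} (he : ∀ k, IsSelfAdjoint (e k)) {b : A}
    (hb : IsSelfAdjoint b) : IsSelfAdjoint (blockSchur e (homologicalSymbol h) b) := by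
  rw [IsSelfAdjoint, star_blockSchur he, hb.star_eq]
  simp only [star_homologicalSymbol_swap]

end HomologicalEquation

/-- Homological equation. Let `H = Σ_{k=1}^d h_k P_k` with pairwise orthogonal
self-adjoint projections summing to the identity and eigenvalues with adjacent
gaps at least `η > 0`. Let `B` be a bounded operator. Then
`X = i Σ_{k ≠ ℓ} (h_k − h_ℓ)⁻¹ P_k B P_ℓ` is the unique bounded operator such
that (i) `i[X, H] = B − Σ_k P_k B P_k` and (ii) `Σ_k P_k X P_k = 0`. Moreover
`‖X‖ ≤ (π/(√3 η)) ‖B‖`, and if `B` is self-adjoint then so is `X`. -/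
theorem stmt_6 {ℋ : Type*} [NormedAddCommGroup ℋ] [InnerProductSpace ℂ ℋ]
    [CompleteSpace ℋ]
    (d : ℕ) (P : Fin d → ℋ →L[ℂ] ℋ) (h : Fin d → ℝ)
    (hPsa : ∀ k, IsSelfAdjoint (P k))
    (hPidem : ∀ k, P k * P k = P k)
    (hPorth : ∀ k l, k ≠ l → P k * P l = 0)
    (hPsum : ∑ k, P k = 1)
    (η : ℝ) (hη : 0 < η)
    (hgap : ∀ k : Fin d, ∀ hk : (k : ℕ) + 1 < d, η ≤ h ⟨(k : ℕ) + 1, hk⟩ - h k)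
    (B : ℋ →L[ℂ] ℋ)
    (H X : ℋ →L[ℂ] ℋ)
    (hH : H = ∑ k, ((h k : ℂ)) • P k)
    (hX : X = Complex.I •
      ∑ k, ∑ l, if k = l then 0 else (((h k : ℂ) - (h l : ℂ))⁻¹) • (P k * B * P l)) :
    (Complex.I • (X * H - H * X) = B - ∑ k, P k * B * P k) ∧
    (∑ k, P k * X * P k = 0) ∧
    (∀ Y : ℋ →L[ℂ] ℋ,
      Complex.I • (Y * H - H * Y) = B - ∑ k, P k * B * P k →
      (∑ k, P k * Y * P k = 0) → Y = X) ∧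
    ‖X‖ ≤ Real.pi / (Real.sqrt 3 * η) * ‖B‖ ∧
    (IsSelfAdjoint B → IsSelfAdjoint X) := by
  have hP : CompleteOrthogonalIdempotents P := ⟨⟨hPidem, fun k l ↦ hPorth k l⟩, hPsum⟩
  have hXS : X = blockSchur P (homologicalSymbol h) B :=
    hX.trans (smul_sum_eq_blockSchur_homologicalSymbol h P B)
  have solution_iff (Y : ℋ →L[ℂ] ℋ) :
      (Complex.I • (Y * H - H * Y) = B - ∑ k, P k * B * P k ∧ ∑ k, P k * Y * P k = 0) ↔ Y = X := by
    rw [hH, hXS]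
    exact homologicalEquation_iff hP (strictMono_of_gap hη hgap).injective B Y
  obtain ⟨commutator_eq, diagonal_eq⟩ := (solution_iff X).2 rfl
  have column_sum_le (l : Fin d) :
      ∑ k, ‖homologicalSymbol h k l‖ ^ 2 ≤ (Real.pi / (√3 * η)) ^ 2 := by
    simp only [norm_homologicalSymbol_sq]
    exact sum_inv_sub_sq_le_of_gap hη hgap l
  refine ⟨commutator_eq, diagonal_eq, fun Y hY hdiag ↦ (solution_iff Y).1 ⟨hY, hdiag⟩, ?_, ?_⟩
  · exact hXS ▸ norm_blockSchur_le hPsa hP (by positivity) column_sum_le B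
  · exact fun hB ↦ hXS ▸ isSelfAdjoint_blockSchur_homologicalSymbol hPsa hB
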